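/- Given a recollement (S, T, U) and a Serre functor F on T, the composite functor i^! ∘ F ∘ i_* : S → S is a right Serre functor on S. -/

import Mathlib

/-!
Setting: `k` a field; `S`, `T`, `U` skeletally small `k`-linear triangulated categories
with finite-dimensional Hom-spaces, `T` with split idempotents.  A recollement
`(S, T, U)` as in [BBD], and (right/left) Serre functors in the sense of
Reiten–Van den Bergh.
-/

open CategoryTheory CategoryTheory.Limits CategoryTheory.Pretriangulated

universe v₁ v₂ v₃ u₁ u₂ u₃ u₄

/-- A right Serre structure on an endofunctor `F` of a `k`-linear category `C`:
isomorphisms `C(X, Y) ≅ C(Y, F X)^∨`, natural in `X` and `Y`.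
A right Serre functor is a functor `F` equipped with such a structure. -/
structure RightSerreStructure (k : Type u₄) [Field k] (C : Type u₁) [Category.{v₁} C]
    [Preadditive C] [CategoryTheory.Linear k C] (F : C ⥤ C) where
  equiv : ∀ X Y : C, (X ⟶ Y) ≃ₗ[k] Module.Dual k (Y ⟶ F.obj X)
  naturality_left : ∀ {X X' Y : C} (f : X' ⟶ X) (φ : X ⟶ Y) (u : Y ⟶ F.obj X'),
    equiv X' Y (f ≫ φ) u = equiv X Y φ (u ≫ F.map f)
  naturality_right : ∀ {X Y Y' : C} (φ : X ⟶ Y) (g : Y ⟶ Y') (u : Y' ⟶ F.obj X),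
    equiv X Y' (φ ≫ g) u = equiv X Y φ (g ≫ u)

/-- A left Serre structure on an endofunctor `F'` of a `k`-linear category `C`:
isomorphisms `C(X, Y) ≅ C(F' Y, X)^∨`, natural in `X` and `Y`.
A left Serre functor is a functor `F'` equipped with such a structure. -/
structure LeftSerreStructure (k : Type u₄) [Field k] (C : Type u₁) [Category.{v₁} C]
    [Preadditive C] [CategoryTheory.Linear k C] (F' : C ⥤ C) where
  equiv : ∀ X Y : C, (X ⟶ Y) ≃ₗ[k] Module.Dual k (F'.obj Y ⟶ X)
  naturality_left : ∀ {X X' Y : C} (f : X' ⟶ X) (φ : X ⟶ Y) (u : F'.obj Y ⟶ X'),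
    equiv X' Y (f ≫ φ) u = equiv X Y φ (u ≫ f)
  naturality_right : ∀ {X Y Y' : C} (φ : X ⟶ Y) (g : Y ⟶ Y') (u : F'.obj Y' ⟶ X),
    equiv X Y' (φ ≫ g) u = equiv X Y φ (F'.map g ≫ u)

/-- A Serre functor: an essentially surjective right Serre functor. -/
structure SerreFunctor (k : Type u₄) [Field k] (C : Type u₁) [Category.{v₁} C]
    [Preadditive C] [CategoryTheory.Linear k C] where
  F : C ⥤ C
  rightSerre : RightSerreStructure k C F
  essSurj : F.EssSurj

/-- A recollement of triangulated categories `(S, T, U)`: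
triangulated functors `i_* = iSt : S ⥤ T`, `i^* = iUp, i^! = iSh : T ⥤ S`,
`j^* = jUp : T ⥤ U`, `j_! = jLo, j_* = jSt : U ⥤ T` with the adjunctions,
vanishing, full faithfulness and distinguished-triangle conditions of [BBD, sec. 1.4]. -/
structure Recollement (S : Type u₁) (T : Type u₂) (U : Type u₃)
    [Category.{v₁} S] [Category.{v₂} T] [Category.{v₃} U]
    [HasZeroObject S] [HasZeroObject T] [HasZeroObject U]
    [Preadditive S] [Preadditive T] [Preadditive U]
    [HasShift S ℤ] [HasShift T ℤ] [HasShift U ℤ]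
    [∀ n : ℤ, (shiftFunctor S n).Additive] [∀ n : ℤ, (shiftFunctor T n).Additive]
    [∀ n : ℤ, (shiftFunctor U n).Additive]
    [Pretriangulated S] [Pretriangulated T] [Pretriangulated U] where
  /-- `i_* : S ⥤ T` -/
  iSt : S ⥤ T
  /-- `i^* : T ⥤ S` -/
  iUp : T ⥤ S
  /-- `i^! : T ⥤ S` -/
  iSh : T ⥤ S
  /-- `j^* : T ⥤ U` -/
  jUp : T ⥤ U
  /-- `j_! : U ⥤ T` -/
  jLo : U ⥤ T
  /-- `j_* : U ⥤ T` -/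
  jSt : U ⥤ T
  [commShift_iSt : iSt.CommShift ℤ]
  [commShift_iUp : iUp.CommShift ℤ]
  [commShift_iSh : iSh.CommShift ℤ]
  [commShift_jUp : jUp.CommShift ℤ]
  [commShift_jLo : jLo.CommShift ℤ]
  [commShift_jSt : jSt.CommShift ℤ]
  [isTriangulated_iSt : iSt.IsTriangulated]
  [isTriangulated_iUp : iUp.IsTriangulated]
  [isTriangulated_iSh : iSh.IsTriangulated]
  [isTriangulated_jUp : jUp.IsTriangulated]
  [isTriangulated_jLo : jLo.IsTriangulated]
  [isTriangulated_jSt : jSt.IsTriangulated]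
  /-- `(i^*, i_*)` is an adjoint pair. -/
  adj₁ : iUp ⊣ iSt
  /-- `(i_*, i^!)` is an adjoint pair. -/
  adj₂ : iSt ⊣ iSh
  /-- `(j_!, j^*)` is an adjoint pair. -/
  adj₃ : jLo ⊣ jUp
  /-- `(j^*, j_*)` is an adjoint pair. -/
  adj₄ : jUp ⊣ jSt
  /-- `j^* ∘ i_* = 0`. -/
  zero_comp : ∀ X : S, IsZero (jUp.obj (iSt.obj X))
  fullyFaithful_iSt : iSt.FullyFaithful
  fullyFaithful_jLo : jLo.FullyFaithful
  fullyFaithful_jSt : jSt.FullyFaithful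
  /-- The distinguished triangle `i_* i^! X ⟶ X ⟶ j_* j^* X ⟶`, whose morphisms into and
  out of `X` are the counit of `(i_*, i^!)` and the unit of `(j^*, j_*)`. -/
  triangle_a : ∀ X : T, ∃ δ : jSt.obj (jUp.obj X) ⟶ (iSt.obj (iSh.obj X))⟦(1 : ℤ)⟧,
    Triangle.mk (adj₂.counit.app X) (adj₄.unit.app X) δ ∈ distTriang T
  /-- The distinguished triangle `j_! j^* X ⟶ X ⟶ i_* i^* X ⟶`, whose morphisms into and
  out of `X` are the counit of `(j_!, j^*)` and the unit of `(i^*, i_*)`. -/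
  triangle_b : ∀ X : T, ∃ δ : iSt.obj (iUp.obj X) ⟶ (jLo.obj (jUp.obj X))⟦(1 : ℤ)⟧,
    Triangle.mk (adj₃.counit.app X) (adj₁.unit.app X) δ ∈ distTriang T


/-!
Scalars of `T` act on `S` through the fully faithful `i_*`, and for this action the adjunction
`i_* ⊣ i^!` turns the Serre duality of `T` into one for `i^! ∘ F ∘ i_*`. As `i_*` need not be
`k`-linear, the transported action can differ from the given one, so two `k`-duals of each
Hom-space have to be compared.

Both actions, written `L` and `K`, factor through the center `Z` of `S`, and the Serre pairing is
`Z`-balanced. It therefore lifts to a `Z`-bilinear pairing with values in `E = Hom_L(Z, L)`.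
Every `Z`-linear map from an `L`-finite submodule of `E` to `E` is multiplication by an element of
`Z`, so simple `L`-finite submodules of `E` that are isomorphic are equal, and distinct ones are
independent. Hence some `K`-linear `ψ : E → K` is nonzero on each of them, and therefore on every
nonzero `L`-finite submodule. Composing the `Z`-bilinear pairing with `ψ` gives a `K`-bilinear
pairing without kernels, which is perfect by finiteness.
-/

section Submodule

theorem submodule_finite_of_le {L Z E : Type*} [Ring L] [IsNoetherianRing L] [Ring Z]
    [AddCommGroup E] [Module L E] [Module Z E] [SMul L Z] [IsScalarTower L Z E]
    {A B : Submodule Z E} [Module.Finite L B] (h : A ≤ B) : Module.Finite L A :=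
  .of_injective ((Submodule.inclusion h).restrictScalars L) (Submodule.inclusion_injective h)

theorem iSupIndep_of_isSimpleModule {R E ι : Type*} [Ring R] [AddCommGroup E] [Module R E]
    {N : ι → Submodule R E} [∀ i, IsSimpleModule R (N i)]
    (hiso : ∀ i j, Nonempty (N i ≃ₗ[R] N j) → i = j) : iSupIndep N := by
  refine iSupIndep_def'.mpr fun i => ?_
  by_contra hdisj
  rw [IsSimpleModule.isAtom.not_disjoint_iff_le] at hdisj
  have : ∀ A : N '' {j | j ≠ i}, IsSimpleModule R A := by
    rintro ⟨_, j, -, rfl⟩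
    infer_instance
  obtain ⟨_, ⟨j, hj, rfl⟩, e⟩ := Submodule.linearEquiv_of_le_sSup _ _ hdisj
  exact hj (hiso i j e).symm

theorem exists_dual_apply_ne_zero_of_iSupIndep {K R E ι : Type*} [Field K] [Ring R]
    [AddCommGroup E] [Module K E] [Module R E] [SMul K R] [IsScalarTower K R E]
    {N : ι → Submodule R E} (hN : iSupIndep N) (hne : ∀ i, N i ≠ ⊥) :
    ∃ ψ : Module.Dual K E, ∀ i, ∃ x ∈ N i, ψ x ≠ 0 := by
  choose x hxN hx using fun i => (N i).exists_mem_ne_zero_of_ne_bot (hne i)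
  have hNK : iSupIndep fun i => (N i).restrictScalars K := fun i => by
    simpa only [← Submodule.restrictScalars_iSup, Submodule.disjoint_def,
      Submodule.restrictScalars_mem] using Submodule.disjoint_def.mp (hN i)
  have hli : LinearIndependent K x := hNK.linearIndependent _ hxN hx
  obtain ⟨ψ, hψ⟩ := LinearMap.exists_extend
    (Finsupp.linearCombination K (fun _ : ι => (1 : K)) ∘ₗ hli.repr)
  have hψx (i : ι) : ψ (x i) = 1 := by
    have h := LinearMap.congr_fun hψ ⟨x i, Submodule.subset_span ⟨i, rfl⟩⟩
    simpa [hli.repr_eq_single i] using h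
  exact ⟨ψ, fun i => ⟨x i, hxN i, by simp [hψx i]⟩⟩

theorem exists_isSimpleModule_le {R E : Type*} [Ring R] [AddCommGroup E] [Module R E]
    {N : Submodule R E} [IsArtinian R N] (hN : N ≠ ⊥) : ∃ A ≤ N, IsSimpleModule R A := by
  have := Submodule.nontrivial_iff_ne_bot.mpr hN
  have : IsAtomic (Submodule R N) := isAtomic_of_orderBot_wellFounded_lt IsWellFounded.wf
  obtain ⟨A, hA⟩ := IsAtomic.exists_atom (Submodule R N)
  have := isSimpleModule_iff_isAtom.mpr hA
  exact ⟨A.map N.subtype, N.map_subtype_le A,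
    .congr (A.equivMapOfInjective N.subtype N.injective_subtype).symm⟩

end Submodule

section Separating

/-- A functional on a `Z`-module is separating if its kernel contains no nonzero
`Z`-submodule. -/
def IsSeparating (Z : Type*) {L E : Type*} [Field L] [CommRing Z] [AddCommGroup E] [Module L E]
    [Module Z E] (ε : Module.Dual L E) : Prop :=
  ∀ x : E, (∀ z : Z, ε (z • x) = 0) → x = 0

/-- The weakening of `IsSeparating` in which the kernel of the `K`-linear functional contains no
nonzero `Z`-submodule that is finite over a second field `L`; it is what remains available after
exchanging `L` for `K`. -/
def IsFinitelySeparating (L Z : Type*) {K E : Type*} [Field K] [Field L] [CommRing Z]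
    [AddCommGroup E] [Module K E] [Module L E] [Module Z E] [SMul L Z] [IsScalarTower L Z E]
    (ψ : Module.Dual K E) : Prop :=
  ∀ x : E, Module.Finite L (Submodule.span Z {x}) → (∀ z : Z, ψ (z • x) = 0) → x = 0

variable {L Z E : Type*} [Field L] [CommRing Z] [Algebra L Z] [AddCommGroup E] [Module L E]
  [Module Z E] [IsScalarTower L Z E]

namespace IsSeparating

variable {ε : Module.Dual L E}

theorem exists_forall_eq_smul (hε : IsSeparating Z ε) {N : Submodule Z E} [Module.Finite L N]
    (σ : N →ₗ[Z] E) : ∃ z : Z, ∀ x : N, σ x = z • (x : E) := by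
  let B : N →ₗ[L] Z →ₗ[L] L :=
    .mk₂ L (fun x z => ε (z • (x : E))) (fun x x' z => by simp)
      (fun a x z => by simp [smul_algebra_smul_comm]) (fun x z z' => by simp [add_smul])
      (fun a x z => by simp)
  have hB : Function.Injective B := (injective_iff_map_eq_zero B).mpr fun x hx =>
    Subtype.ext (hε x (LinearMap.congr_fun hx))
  obtain ⟨z, hz⟩ := LinearMap.flip_surjective_iff₁.mpr hB (ε ∘ₗ σ.restrictScalars L)
  refine ⟨z, fun x => sub_eq_zero.mp (hε _ fun w => ?_)⟩
  have hzx : ε (z • w • (x : E)) = ε (σ (w • x)) := LinearMap.congr_fun hz (w • x)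
  rw [smul_sub, map_sub, smul_comm, hzx, map_smul σ, sub_self]

theorem le_of_linearEquiv (hε : IsSeparating Z ε) {N N' : Submodule Z E} [Module.Finite L N]
    (e : N ≃ₗ[Z] N') : N' ≤ N := by
  obtain ⟨z, hz⟩ := hε.exists_forall_eq_smul (N'.subtype ∘ₗ e.toLinearMap)
  intro x hx
  have hx' : x = z • (e.symm ⟨x, hx⟩ : E) := by simpa using hz (e.symm ⟨x, hx⟩)
  exact hx' ▸ N.smul_mem z (e.symm ⟨x, hx⟩).2

theorem exists_isFinitelySeparating (hε : IsSeparating Z ε) (K : Type*) [Field K]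
    [Algebra K Z] [Module K E] [IsScalarTower K Z E] :
    ∃ ψ : Module.Dual K E, IsFinitelySeparating L Z ψ := by
  let ι := {N : Submodule Z E // Module.Finite L N ∧ IsSimpleModule Z N}
  have (A : ι) : Module.Finite L A.1 := A.2.1
  have (A : ι) : IsSimpleModule Z A.1 := A.2.2
  have hind : iSupIndep fun A : ι => A.1 := iSupIndep_of_isSimpleModule fun A B ⟨e⟩ =>
    Subtype.ext ((hε.le_of_linearEquiv e.symm).antisymm (hε.le_of_linearEquiv e))
  obtain ⟨ψ, hψ⟩ := exists_dual_apply_ne_zero_of_iSupIndep (K := K) hind fun A =>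
    IsSimpleModule.isAtom.ne_bot
  refine ⟨ψ, fun x _ hx => ?_⟩
  by_contra hne
  have : IsArtinian Z (Submodule.span Z {x}) := isArtinian_of_tower L inferInstance
  obtain ⟨A, hAx, hA⟩ := exists_isSimpleModule_le (R := Z)
    (mt Submodule.span_singleton_eq_bot.mp hne)
  obtain ⟨y, hyA, hy⟩ := hψ ⟨A, submodule_finite_of_le hAx, hA⟩
  obtain ⟨z, rfl⟩ := Submodule.mem_span_singleton.mp (hAx hyA)
  exact hy (hx z)

end IsSeparating

namespace IsFinitelySeparating

variable {K M N : Type*} [Field K] [Module K E] {ψ : Module.Dual K E}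
  [AddCommGroup M] [Module L M] [Module Z M] [IsScalarTower L Z M] [Module.Finite L M]
  [AddCommGroup N] [Module L N] [Module Z N] [IsScalarTower L Z N] [Module.Finite L N]

theorem eq_zero_of_forall_dual_apply_eq_zero (hψ : IsFinitelySeparating L Z ψ) {σ : M →ₗ[Z] E}
    (hσ : ∀ m, ψ (σ m) = 0) : σ = 0 := by
  ext m
  have : Module.Finite L σ.range :=
    .of_surjective (σ.rangeRestrict.restrictScalars L) σ.surjective_rangeRestrict
  have hspan : Submodule.span Z {σ m} ≤ σ.range :=
    (Submodule.span_singleton_le_iff_mem _ _).mpr (σ.mem_range_self m)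
  exact hψ (σ m) (submodule_finite_of_le hspan) fun z => by rw [← map_smul, hσ]

theorem isPerfPair [Algebra K Z] [IsScalarTower K Z E] [Module K M] [IsScalarTower K Z M]
    [Module.Finite K M] [Module K N] [IsScalarTower K Z N] (hψ : IsFinitelySeparating L Z ψ)
    {c : M →ₗ[Z] N →ₗ[Z] E} (hc : Function.Injective c) (hc' : Function.Injective c.flip) :
    ((c.restrictScalars₁₂ K K).compr₂ ψ).IsPerfPair := by
  apply LinearMap.IsPerfPair.of_injective
  · refine (injective_iff_map_eq_zero _).mpr fun m hm => (map_eq_zero_iff c hc).mp ?_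
    exact hψ.eq_zero_of_forall_dual_apply_eq_zero (LinearMap.congr_fun hm)
  · refine (injective_iff_map_eq_zero _).mpr fun n hn => (map_eq_zero_iff c.flip hc').mp ?_
    exact hψ.eq_zero_of_forall_dual_apply_eq_zero (LinearMap.congr_fun hn)

end IsFinitelySeparating

end Separating

section Coinduced

/-- The `Z`-module structure on the `L`-linear dual of an `L`-algebra `Z` given by
`(z • φ) w = φ (z * w)`, that is, the module coinduced from `L`. It is not a global instance
because `Module.Dual L L` carries its own `L`-action. -/
abbrev dualModule (L Z : Type*) [Field L] [CommRing Z] [Algebra L Z] :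
    Module Z (Module.Dual L Z) where
  smul z φ := φ ∘ₗ LinearMap.mulLeft L z
  one_smul φ := LinearMap.ext fun w => congrArg φ (one_mul w)
  mul_smul z z' φ := LinearMap.ext fun w => congrArg φ (by simp [mul_left_comm])
  smul_zero z := LinearMap.zero_comp _
  zero_smul φ := LinearMap.ext fun w => by simp [HSMul.hSMul]
  smul_add z φ φ' := LinearMap.add_comp _ _ _
  add_smul z z' φ := LinearMap.ext fun w => by simp [HSMul.hSMul, add_mul]

attribute [local instance] dualModule

variable {L Z M N : Type*} [Field L] [CommRing Z] [Algebra L Z]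

theorem dualModule_smul_apply (z w : Z) (φ : Module.Dual L Z) : (z • φ) w = φ (z * w) := rfl

instance dualModule_isScalarTower : IsScalarTower L Z (Module.Dual L Z) where
  smul_assoc c z φ := by
    ext w
    simp [dualModule_smul_apply]

theorem isSeparating_eval_one :
    IsSeparating Z (LinearMap.applyₗ (1 : Z) : Module.Dual L (Module.Dual L Z)) :=
  fun φ hφ => LinearMap.ext fun z => by simpa [dualModule_smul_apply] using hφ z

variable [AddCommGroup M] [Module L M] [Module Z M] [AddCommGroup N] [Module L N] [Module Z N]
  [IsScalarTower L Z N] {b : M →ₗ[L] N →ₗ[L] L}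

/-- The `Z`-bilinear pairing `(m, n) ↦ (z ↦ b m (z • n))` with values in the coinduced module,
which corresponds to a `Z`-balanced `L`-bilinear form `b`. -/
def coinducedPairing (b : M →ₗ[L] N →ₗ[L] L)
    (hb : ∀ (z : Z) m n, b (z • m) n = b m (z • n)) : M →ₗ[Z] N →ₗ[Z] Module.Dual L Z :=
  .mk₂ Z (fun m n => b m ∘ₗ (LinearMap.toSpanSingleton Z N n).restrictScalars L)
    (fun m m' n => by ext z; simp)
    (fun z m n => by ext w; simp [dualModule_smul_apply, hb, mul_smul])
    (fun m n n' => by ext z; simp)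
    (fun z m n => by ext w; simp [dualModule_smul_apply, mul_smul, smul_comm z w n])

theorem coinducedPairing_apply (hb : ∀ (z : Z) m n, b (z • m) n = b m (z • n)) (m : M) (n : N)
    (z : Z) : coinducedPairing b hb m n z = b m (z • n) := rfl

theorem coinducedPairing_injective (hb : ∀ (z : Z) m n, b (z • m) n = b m (z • n))
    (h : Function.Injective b) : Function.Injective (coinducedPairing b hb) :=
  fun m m' hm => h <| LinearMap.ext fun n => by
    simpa [coinducedPairing_apply] using LinearMap.congr_fun (LinearMap.congr_fun hm n) 1

theorem coinducedPairing_flip_injective (hb : ∀ (z : Z) m n, b (z • m) n = b m (z • n))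
    (h : Function.Injective b.flip) : Function.Injective (coinducedPairing b hb).flip :=
  fun n n' hn => h <| LinearMap.ext fun m => by
    simpa [coinducedPairing_apply] using LinearMap.congr_fun (LinearMap.congr_fun hn m) 1

end Coinduced

section ChangeOfField

variable {C : Type u₁} [Category.{v₁} C] [Preadditive C]

namespace RightSerreStructure

attribute [local instance] dualModule in
theorem nonempty_of_isScalarTower {K L : Type*} (Z : Type*) [Field K] [Field L] [CommRing Z]
    [Algebra K Z] [Algebra L Z] [Linear K C] [Linear L C] [Linear Z C]
    [∀ X Y : C, IsScalarTower K Z (X ⟶ Y)] [∀ X Y : C, IsScalarTower L Z (X ⟶ Y)]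
    [∀ X Y : C, Module.Finite K (X ⟶ Y)] [∀ X Y : C, Module.Finite L (X ⟶ Y)]
    {F : C ⥤ C} (h : RightSerreStructure L C F) : Nonempty (RightSerreStructure K C F) := by
  let : Module K (Module.Dual L Z) := Module.compHom _ (algebraMap K Z)
  have : IsScalarTower K Z (Module.Dual L Z) := .of_algebraMap_smul fun _ _ => rfl
  obtain ⟨ψ, hψ⟩ := (isSeparating_eval_one (L := L) (Z := Z)).exists_isFinitelySeparating K
  have hbal (X Y : C) (z : Z) (f : X ⟶ Y) (u : Y ⟶ F.obj X) :
      h.equiv X Y (z • f) u = h.equiv X Y f (z • u) := by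
    simpa using h.naturality_right f (z • 𝟙 Y) u
  let c (X Y : C) := coinducedPairing (h.equiv X Y).toLinearMap (hbal X Y)
  have hperf (X Y : C) : (((c X Y).restrictScalars₁₂ K K).compr₂ ψ).IsPerfPair :=
    hψ.isPerfPair (coinducedPairing_injective _ (h.equiv X Y).injective)
      (coinducedPairing_flip_injective _
        (LinearMap.flip_injective_iff₁.mpr (h.equiv X Y).surjective))
  refine ⟨⟨fun X Y => ((c X Y).restrictScalars₁₂ K K).compr₂ ψ |>.toPerfPair,
    fun f φ u => congrArg ψ ?_, fun φ g u => congrArg ψ ?_⟩⟩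
  · ext z
    simpa [c, coinducedPairing_apply] using h.naturality_left f φ (z • u)
  · ext z
    simpa [c, coinducedPairing_apply] using h.naturality_right φ g (z • u)

end RightSerreStructure

open scoped IsMulCommutative in
/-- A preadditive category is linear over its center. The action is the one of Mathlib's
`SMul (CatCenter C) (X ⟶ Y)`, so that no second scalar action is introduced on Hom-groups. -/
abbrev linearCatCenter (C : Type u₁) [Category.{v₁} C] [Preadditive C] :
    Linear (CatCenter C) C where
  homModule X Y :=
    { one_smul := fun f => Category.comp_id f
      mul_smul := fun z w f => by
        simp only [CatCenter.smul_eq, CatCenter.mul_app', Category.assoc]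
      smul_zero := fun z => zero_comp
      zero_smul := fun f => comp_zero
      smul_add := fun z f g => Preadditive.add_comp _ _ _ f g _
      add_smul := fun z w f => Preadditive.comp_add _ _ _ f _ _ }
  smul_comp X Y W z f g := by rw [CatCenter.smul_eq', CatCenter.smul_eq', Category.assoc]
  comp_smul X Y W f z g := (Category.assoc f g _).symm

theorem toCatCenter_smul (K : Type*) [Ring K] [Linear K C] {X Y : C} (a : K) (f : X ⟶ Y) :
    Linear.toCatCenter K C a • f = a • f := by
  simp only [CatCenter.smul_eq, Linear.toCatCenter_apply_app, Linear.comp_smul,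
    Category.comp_id]

open scoped IsMulCommutative in
attribute [local instance] linearCatCenter in
theorem RightSerreStructure.nonempty_changeField (K : Type*) {L : Type*} [Field K] [Field L]
    [Linear K C] [Linear L C] [∀ X Y : C, Module.Finite K (X ⟶ Y)]
    [∀ X Y : C, Module.Finite L (X ⟶ Y)] {F : C ⥤ C} (h : RightSerreStructure L C F) :
    Nonempty (RightSerreStructure K C F) := by
  let : Algebra K (CatCenter C) := (Linear.toCatCenter K C).toAlgebra
  let : Algebra L (CatCenter C) := (Linear.toCatCenter L C).toAlgebra
  have (X Y : C) : IsScalarTower K (CatCenter C) (X ⟶ Y) :=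
    .of_algebraMap_smul (toCatCenter_smul K)
  have (X Y : C) : IsScalarTower L (CatCenter C) (X ⟶ Y) :=
    .of_algebraMap_smul (toCatCenter_smul L)
  exact nonempty_of_isScalarTower (CatCenter C) h

end ChangeOfField

section Adjunction

variable {C : Type u₁} {D : Type u₂} [Category.{v₁} C] [Category.{v₂} D] [Preadditive C]
  [Preadditive D] {G : C ⥤ D} {H : D ⥤ C} [G.Additive] (L : Type*) [Ring L] [Linear L D]

/-- The linear structure on the source of a fully faithful functor `G` obtained from one on its
target: `a • f` is the morphism with `G.map (a • f) = a • G.map f`. -/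
abbrev linearOfFullyFaithful (hG : G.FullyFaithful) : Linear L C :=
  let (X Y : C) : SMul L (X ⟶ Y) := ⟨fun a f => hG.preimage (a • G.map f)⟩
  have map_smul {X Y : C} (a : L) (f : X ⟶ Y) : G.map (a • f) = a • G.map f :=
    hG.map_preimage _
  { homModule := fun X Y =>
      (show Function.Injective (G.mapAddHom (X := X) (Y := Y)) from
        fun _ _ => hG.map_injective).module L G.mapAddHom map_smul
    smul_comp := fun X Y Z a f g => hG.map_injective <| by
      rw [map_smul, G.map_comp, map_smul, G.map_comp, Linear.smul_comp]
    comp_smul := fun X Y Z f a g => hG.map_injective <| by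
      rw [map_smul, G.map_comp, map_smul, G.map_comp, Linear.comp_smul] }

theorem linear_linearOfFullyFaithful (hG : G.FullyFaithful) :
    let := linearOfFullyFaithful L hG
    G.Linear L :=
  let := linearOfFullyFaithful L hG
  { map_smul := fun f a => hG.map_preimage (a • G.map f) }

variable [Linear L C] [G.Linear L]

/-- The linear version of `CategoryTheory.Functor.FullyFaithful.homEquiv`. -/
@[simps!]
def fullyFaithfulHomLinearEquiv (hG : G.FullyFaithful) (X Y : C) :
    (X ⟶ Y) ≃ₗ[L] (G.obj X ⟶ G.obj Y) :=
  { G.mapLinearMap L, hG.homEquiv with }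

/-- The linear version of the inverse of `CategoryTheory.Adjunction.homAddEquiv`. -/
@[simps!]
def adjunctionHomLinearEquiv (adj : G ⊣ H) (X : C) (Y : D) :
    (X ⟶ H.obj Y) ≃ₗ[L] (G.obj X ⟶ Y) :=
  (adj.homAddEquiv X Y).symm.toLinearEquiv fun a u => by simp [Adjunction.homEquiv_counit]

/-- The right Serre structure on the source of a fully faithful functor `G` with right adjoint
`H`, given by `C(X, Y) ≅ D(GX, GY) ≅ D(GY, FGX)^∨ ≅ C(Y, HFGX)^∨`. -/
def RightSerreStructure.ofAdjunction {k : Type*} [Field k] [Linear k C] [Linear k D]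
    [G.Linear k] {F : D ⥤ D} (h : RightSerreStructure k D F) (hG : G.FullyFaithful)
    (adj : G ⊣ H) : RightSerreStructure k C (G ⋙ F ⋙ H) where
  equiv X Y := fullyFaithfulHomLinearEquiv k hG X Y ≪≫ₗ h.equiv _ _ ≪≫ₗ
    (adjunctionHomLinearEquiv k adj Y (F.obj (G.obj X))).dualMap
  naturality_left f φ u := by
    simp [h.naturality_left, Adjunction.homEquiv_naturality_right_symm]
  naturality_right φ g u := by
    simp [h.naturality_right, Adjunction.homEquiv_naturality_left_symm]

end Adjunction

theorem recollement_right_serre_structure_on_S_general {K L : Type*} [Field K] [Field L]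
    {S : Type u₁} {T : Type u₂} [Category.{v₁} S] [Category.{v₂} T] [Preadditive S]
    [Preadditive T] [Linear K S] [Linear L T] [∀ X Y : S, Module.Finite K (X ⟶ Y)]
    [∀ X Y : T, Module.Finite L (X ⟶ Y)] {G : S ⥤ T} {H : T ⥤ S} [G.Additive]
    (hG : G.FullyFaithful) (adj : G ⊣ H) {F : T ⥤ T} (h : RightSerreStructure L T F) :
    Nonempty (RightSerreStructure K S (G ⋙ F ⋙ H)) := by
  let := linearOfFullyFaithful L hG
  have : G.Linear L := linear_linearOfFullyFaithful L hG
  have (X Y : S) : Module.Finite L (X ⟶ Y) :=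
    .equiv (fullyFaithfulHomLinearEquiv L hG X Y).symm
  exact (h.ofAdjunction hG adj).nonempty_changeField K

/-- Given a recollement `(S, T, U)` and a Serre functor `F` on `T`, the composite
functor `i^! ∘ F ∘ i_* : S ⥤ S` is a right Serre functor on `S`. -/
theorem recollement_right_serre_structure_on_S
    {k : Type u₄} [Field k]
    {S : Type u₁} {T : Type u₂} {U : Type u₃}
    [Category.{v₁} S] [Category.{v₂} T] [Category.{v₃} U]
    [HasZeroObject S] [HasZeroObject T] [HasZeroObject U]
    [Preadditive S] [Preadditive T] [Preadditive U]
    [CategoryTheory.Linear k S] [CategoryTheory.Linear k T] [CategoryTheory.Linear k U]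
    [HasShift S ℤ] [HasShift T ℤ] [HasShift U ℤ]
    [∀ n : ℤ, (shiftFunctor S n).Additive] [∀ n : ℤ, (shiftFunctor T n).Additive]
    [∀ n : ℤ, (shiftFunctor U n).Additive]
    [Pretriangulated S] [Pretriangulated T] [Pretriangulated U]
    [EssentiallySmall.{v₁} S] [EssentiallySmall.{v₂} T] [EssentiallySmall.{v₃} U]
    [∀ X Y : S, FiniteDimensional k (X ⟶ Y)]
    [∀ X Y : T, FiniteDimensional k (X ⟶ Y)]
    [∀ X Y : U, FiniteDimensional k (X ⟶ Y)]
    [IsIdempotentComplete T]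
    (R : Recollement S T U)
    (SF : SerreFunctor k T) :
    Nonempty (RightSerreStructure k S (R.iSt ⋙ SF.F ⋙ R.iSh)) := by
  let := R.commShift_iSt
  have := R.isTriangulated_iSt
  exact recollement_right_serre_structure_on_S_general R.fullyFaithful_iSt R.adj₂ SF.rightSerre
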